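/- arXiv:0709.0036 — 2 statements merged into one kernel-verified Lean document; each statement's English description precedes it below -/
import Mathlib

section
/- (Rank inequality.) Let A and B be two n×m complex matrices. Let F_A and F_B be the cumulative distribution functions of the empirical measures (1/n)∑_{k=1}^n δ_{s_k(A)} and (1/n)∑_{k=1}^n δ_{s_k(B)} of the singular values of A and B respectively. Then sup_{x∈ℝ}|F_A(x) − F_B(x)| ≤ rank(A − B)/n. -/
open Finset Matrix

/-- The singular values of an `n × m` complex matrix `A`: the square roots of the
eigenvalues of the positive semidefinite Hermitian matrix `A Aᴴ` (indexed by `Fin n`,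
with multiplicity, in no particular order). -/
noncomputable def singVals {n m : ℕ} (A : Matrix (Fin n) (Fin m) ℂ) : Fin n → ℝ :=
  fun i => Real.sqrt ((Matrix.isHermitian_mul_conjTranspose_self A).eigenvalues i)


open scoped InnerProductSpace in
lemma quad_aux {n : ℕ} {H : Matrix (Fin n) (Fin n) ℂ} (hH : H.IsHermitian)
    (v : EuclideanSpace ℂ (Fin n)) :
    inner ℂ v (Matrix.toEuclideanLin H v) =
      ((∑ i, hH.eigenvalues i * ‖inner ℂ (hH.eigenvectorBasis i) v‖ ^ 2 : ℝ) : ℂ) := by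
  rw [← hH.eigenvectorBasis.sum_inner_mul_inner]
  push_cast
  refine Finset.sum_congr rfl fun i _ => ?_
  have h1 : inner ℂ (hH.eigenvectorBasis i) (Matrix.toEuclideanLin H v)
      = (hH.eigenvalues i : ℂ) * inner ℂ (hH.eigenvectorBasis i) v := by
    have hs := Matrix.isSymmetric_toEuclideanLin_iff.2 hH
    rw [← hs (hH.eigenvectorBasis i) v]
    have : Matrix.toEuclideanLin H (hH.eigenvectorBasis i)
        = (hH.eigenvalues i : ℂ) • hH.eigenvectorBasis i := by
      have := hH.mulVec_eigenvectorBasis i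
      ext j
      have := congrFun this j
      simpa [Matrix.toLpLin_apply] using this
    rw [this, inner_smul_left]
    simp
  rw [h1, ← inner_conj_symm v, mul_left_comm]
  congr 1
  rw [RCLike.conj_mul]
  simp

lemma quad_norm {n m : ℕ} (A : Matrix (Fin n) (Fin m) ℂ) (v : EuclideanSpace ℂ (Fin n)) :
    inner ℂ v (Matrix.toEuclideanLin (A * Aᴴ) v)
      = star (Aᴴ *ᵥ v.ofLp) ⬝ᵥ (Aᴴ *ᵥ v.ofLp) := by
  rw [EuclideanSpace.inner_eq_star_dotProduct, Matrix.toLpLin_apply, Matrix.star_mulVec,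
    Matrix.conjTranspose_conjTranspose, ← Matrix.mulVec_mulVec, dotProduct_comm,
    Matrix.dotProduct_mulVec]

open scoped ComplexOrder in
lemma card_aux {n m : ℕ} (A B : Matrix (Fin n) (Fin m) ℂ) (x : ℝ) :
    (univ.filter fun k => singVals A k ≤ x).card ≤
      (univ.filter fun k => singVals B k ≤ x).card + (A - B).rank := by
  rcases lt_or_ge x 0 with hx | hx
  · rw [Finset.filter_false_of_mem]
    · simp
    · intro k _ h
      exact absurd (h.trans_lt hx) (not_lt.2 (Real.sqrt_nonneg _))
  by_contra! hlt
  set hA := Matrix.isHermitian_mul_conjTranspose_self A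
  set hB := Matrix.isHermitian_mul_conjTranspose_self B
  let L1 : EuclideanSpace ℂ (Fin n) →ₗ[ℂ] ({k // ¬ singVals A k ≤ x} → ℂ) :=
    LinearMap.pi fun k => (innerSL ℂ (hA.eigenvectorBasis k.1)).toLinearMap
  let L2 : EuclideanSpace ℂ (Fin n) →ₗ[ℂ] ({k // singVals B k ≤ x} → ℂ) :=
    LinearMap.pi fun k => (innerSL ℂ (hB.eigenvectorBasis k.1)).toLinearMap
  let L3 := ((A - B)ᴴ.mulVecLin.rangeRestrict).comp
    (WithLp.linearEquiv 2 ℂ (Fin n → ℂ)).toLinearMap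
  have hd : Module.finrank ℂ (({k // ¬ singVals A k ≤ x} → ℂ) × ({k // singVals B k ≤ x} → ℂ)
      × LinearMap.range (A - B)ᴴ.mulVecLin) < Module.finrank ℂ (EuclideanSpace ℂ (Fin n)) := by
    have hr : Module.finrank ℂ (LinearMap.range (A - B)ᴴ.mulVecLin) = (A - B).rank := by
      rw [← Matrix.rank_conjTranspose (A - B)]; rfl
    have hc := Finset.card_filter_add_card_filter_not (s := univ) (fun k => singVals A k ≤ x)
    rw [Module.finrank_prod, Module.finrank_prod, hr, Module.finrank_fintype_fun_eq_card,
      Module.finrank_fintype_fun_eq_card, finrank_euclideanSpace, Fintype.card_subtype,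
      Fintype.card_subtype]
    simp only [Finset.card_univ] at hc
    omega
  obtain ⟨v, hv, hv0⟩ := (Submodule.ne_bot_iff _).1
    (LinearMap.ker_ne_bot_of_finrank_lt (f := L1.prod (L2.prod L3)) hd)
  have hv' : L1 v = 0 ∧ L2 v = 0 ∧ L3 v = 0 := by
    simpa [LinearMap.mem_ker, Prod.ext_iff] using hv
  obtain ⟨h1, h2, h3⟩ := hv'
  have h1' : ∀ k, ¬ singVals A k ≤ x → inner ℂ (hA.eigenvectorBasis k) v = 0 :=
    fun k hk => congrFun h1 ⟨k, hk⟩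
  have h2' : ∀ k, singVals B k ≤ x → inner ℂ (hB.eigenvectorBasis k) v = 0 :=
    fun k hk => congrFun h2 ⟨k, hk⟩
  have h3' : Aᴴ *ᵥ v.ofLp = Bᴴ *ᵥ v.ofLp := by
    have : (A - B)ᴴ *ᵥ v.ofLp = 0 := congrArg Subtype.val h3
    rw [Matrix.conjTranspose_sub, Matrix.sub_mulVec] at this
    exact sub_eq_zero.1 this
  have hq : ∑ i, hA.eigenvalues i * ‖inner ℂ (hA.eigenvectorBasis i) v‖ ^ 2
      = ∑ i, hB.eigenvalues i * ‖inner ℂ (hB.eigenvectorBasis i) v‖ ^ 2 := by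
    have e := quad_norm A v
    rw [h3', ← quad_norm B v, quad_aux hA, quad_aux hB] at e
    exact_mod_cast e
  have hle : ∑ i, hA.eigenvalues i * ‖inner ℂ (hA.eigenvectorBasis i) v‖ ^ 2
      ≤ ∑ i, x ^ 2 * ‖inner ℂ (hA.eigenvectorBasis i) v‖ ^ 2 := by
    refine Finset.sum_le_sum fun i _ => ?_
    by_cases hk : singVals A i ≤ x
    · have : hA.eigenvalues i ≤ x ^ 2 := (Real.sqrt_le_left hx).1 hk
      gcongr
    · simp [h1' i hk]
  have hpos : ∀ i, ¬ singVals B i ≤ x → x ^ 2 < hB.eigenvalues i := fun i hk =>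
    (Real.lt_sqrt hx).1 (not_le.1 hk)
  have hgt : ∑ i, x ^ 2 * ‖inner ℂ (hB.eigenvectorBasis i) v‖ ^ 2
      < ∑ i, hB.eigenvalues i * ‖inner ℂ (hB.eigenvectorBasis i) v‖ ^ 2 := by
    refine Finset.sum_lt_sum (fun i _ => ?_) ?_
    · by_cases hk : singVals B i ≤ x
      · simp [h2' i hk]
      · have := hpos i hk
        gcongr
    · by_contra! hcon
      apply hv0
      have hz : ∀ i, inner ℂ (hB.eigenvectorBasis i) v = 0 := by
        intro i
        by_contra hne
        have hk : ¬ singVals B i ≤ x := fun hk => hne (h2' i hk)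
        have := hcon i (Finset.mem_univ _)
        have hp : 0 < ‖inner ℂ (hB.eigenvectorBasis i) v‖ ^ 2 := by positivity
        exact absurd (mul_lt_mul_of_pos_right (hpos i hk) hp) (not_lt.2 this)
      rw [← hB.eigenvectorBasis.sum_repr' v]
      simp [hz]
  rw [← Finset.mul_sum, OrthonormalBasis.sum_sq_norm_inner_right] at hle hgt
  linarith

/-- Rank inequality (Thompson, Bai): the cumulative distribution functions of the
empirical singular value distributions of two `n × m` matrices differ uniformly by at
most `rank(A − B)/n`. -/
theorem singVals_cdf_rank_inequality
    (n m : ℕ) (hn : 0 < n) (A B : Matrix (Fin n) (Fin m) ℂ) :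
    ⨆ x : ℝ,
        |(n : ℝ)⁻¹ * ((univ.filter fun k => singVals A k ≤ x).card : ℝ)
          - (n : ℝ)⁻¹ * ((univ.filter fun k => singVals B k ≤ x).card : ℝ)|
      ≤ ((A - B).rank : ℝ) / n := by
  refine ciSup_le fun x => ?_
  have h1 : ((univ.filter fun k => singVals A k ≤ x).card : ℝ) ≤
      (univ.filter fun k => singVals B k ≤ x).card + (A - B).rank := by
    exact_mod_cast card_aux A B x
  have h2 : ((univ.filter fun k => singVals B k ≤ x).card : ℝ) ≤
      (univ.filter fun k => singVals A k ≤ x).card + (A - B).rank := by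
    have := card_aux B A x
    have hr : (B - A).rank = (A - B).rank := by
      rw [← neg_sub A B, Matrix.rank, Matrix.rank]
      have : (-(A - B)).mulVecLin = -(A - B).mulVecLin := by
        ext; simp [Matrix.neg_mulVec]
      rw [this, LinearMap.range_neg]
    rw [hr] at this
    exact_mod_cast this
  rw [← mul_sub, abs_mul, abs_of_pos (by positivity : (0 : ℝ) < (n : ℝ)⁻¹), div_eq_inv_mul]
  gcongr
  rw [abs_le]
  constructor <;> linarith
end

section
/- Let A and B be n×n complex matrices, let 0 < α_n < β_n, and suppose all singular values of A and of B lie in [α_n, β_n]. Let F and G be the cumulative distribution functions of the empirical singular value measures (1/n)∑_{k=1}^n δ_{s_k(A)} and (1/n)∑_{k=1}^n δ_{s_k(B)}. Then |(1/n)log|det(A)| − (1/n)log|det(B)|| ≤ (log β_n − log α_n)·sup_{x∈ℝ}|F(x) − G(x)|. -/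
open Finset Matrix

open MeasureTheory in
lemma integral_ind_aux (p q c : ℝ) (h1 : p ≤ c) (h2 : c ≤ q) :
    ∫ t in p..q, (if c ≤ t then (1:ℝ) else 0) = q - c := by
  rw [intervalIntegral.integral_of_le (h1.trans h2), ← integral_Icc_eq_integral_Ioc]
  have : (fun t => if c ≤ t then (1:ℝ) else 0) = (Set.Ici c).indicator (fun _ => (1:ℝ)) := by
    ext t; simp [Set.indicator_apply]
  rw [this, setIntegral_indicator measurableSet_Ici]
  have h : Set.Icc p q ∩ Set.Ici c = Set.Icc c q := by
    ext t; simp only [Set.mem_inter_iff, Set.mem_Icc, Set.mem_Ici]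
    constructor
    · rintro ⟨⟨_, b⟩, d⟩; exact ⟨d, b⟩
    · rintro ⟨a, b⟩; exact ⟨⟨h1.trans a, b⟩, a⟩
  rw [h]
  simp [h2]

lemma ind_intervalIntegrable_aux (p q c : ℝ) :
    IntervalIntegrable (fun t => if c ≤ t then (1:ℝ) else 0) MeasureTheory.volume p q := by
  apply Monotone.intervalIntegrable
  intro a b hab
  dsimp only
  split_ifs <;> linarith

lemma log_det_aux {n : ℕ} (A : Matrix (Fin n) (Fin n) ℂ) (hA : ∀ i, 0 < singVals A i) :
    Real.log ‖A.det‖ = ∑ i, Real.log (singVals A i) := by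
  have h := (Matrix.isHermitian_mul_conjTranspose_self A).det_eq_prod_eigenvalues
  have hs : ∀ i, (Matrix.isHermitian_mul_conjTranspose_self A).eigenvalues i = singVals A i ^ 2 := by
    intro i
    have := Real.sqrt_pos.1 (hA i)
    unfold singVals
    rw [Real.sq_sqrt this.le]
  simp only [hs] at h
  rw [Matrix.det_mul, Matrix.det_conjTranspose] at h
  have h2 := congrArg norm h
  rw [norm_mul, norm_star, norm_prod] at h2
  have h3 : ‖A.det‖ ^ 2 = (∏ i, singVals A i) ^ 2 := by
    rw [sq, h2, ← Finset.prod_pow]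
    refine Finset.prod_congr rfl fun i _ => ?_
    simp
  have h4 : ‖A.det‖ = ∏ i, singVals A i :=
    (pow_left_inj₀ (norm_nonneg _) (Finset.prod_nonneg fun i _ => (hA i).le) two_ne_zero).1 h3
  rw [h4, Real.log_prod fun i _ => (hA i).ne']

lemma log_det_integral_aux {n : ℕ} (A : Matrix (Fin n) (Fin n) ℂ) (α β : ℝ) (hα : 0 < α)
    (hA : ∀ i, singVals A i ∈ Set.Icc α β) :
    IntervalIntegrable (fun t => ((univ.filter fun k => singVals A k ≤ Real.exp t).card : ℝ))
      MeasureTheory.volume (Real.log α) (Real.log β) ∧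
    Real.log ‖A.det‖ = n * Real.log β - ∫ t in (Real.log α)..(Real.log β),
      ((univ.filter fun k => singVals A k ≤ Real.exp t).card : ℝ) := by
  have hp : ∀ i, 0 < singVals A i := fun i => hα.trans_le (hA i).1
  have e : (fun t => ((univ.filter fun k => singVals A k ≤ Real.exp t).card : ℝ))
      = fun t => ∑ k, if Real.log (singVals A k) ≤ t then (1:ℝ) else 0 := by
    ext t
    simp [Real.log_le_iff_le_exp (hp _)]
  rw [log_det_aux A hp, e]
  constructor
  · apply Monotone.intervalIntegrable
    intro a b hab
    refine Finset.sum_le_sum fun k _ => ?_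
    split_ifs <;> linarith
  · rw [intervalIntegral.integral_finsetSum fun k _ => ind_intervalIntegrable_aux _ _ _]
    rw [Finset.sum_congr rfl fun k _ => integral_ind_aux _ _ _
      (Real.log_le_log hα (hA k).1) (Real.log_le_log (hp k) (hA k).2)]
    simp [Finset.sum_sub_distrib]

/-- If all singular values of `A` and `B` lie in `[α, β] ⊂ (0, ∞)`, then
`|(1/n) log|det A| − (1/n) log|det B|| ≤ (log β − log α) · ‖F − G‖_∞`, where `F`, `G`
are the cumulative distribution functions of the empirical singular value
distributions of `A` and `B`. -/
theorem log_abs_det_diff_le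
    (n : ℕ) (hn : 0 < n) (A B : Matrix (Fin n) (Fin n) ℂ)
    (α β : ℝ) (hα : 0 < α) (hαβ : α < β)
    (hA : ∀ i, singVals A i ∈ Set.Icc α β)
    (hB : ∀ i, singVals B i ∈ Set.Icc α β) :
    |(n : ℝ)⁻¹ * Real.log ‖A.det‖ - (n : ℝ)⁻¹ * Real.log ‖B.det‖|
      ≤ (Real.log β - Real.log α) * ⨆ x : ℝ,
          |(n : ℝ)⁻¹ * ((univ.filter fun k => singVals A k ≤ x).card : ℝ)
            - (n : ℝ)⁻¹ * ((univ.filter fun k => singVals B k ≤ x).card : ℝ)| := by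
  obtain ⟨iA, eA⟩ := log_det_integral_aux A α β hα hA
  obtain ⟨iB, eB⟩ := log_det_integral_aux B α β hα hB
  have hl : Real.log α ≤ Real.log β := Real.log_le_log hα hαβ.le
  have hn' : (0:ℝ) < n := by exact_mod_cast hn
  have bnd : ∀ (C : Matrix (Fin n) (Fin n) ℂ) (x : ℝ),
      0 ≤ (n : ℝ)⁻¹ * ((univ.filter fun k => singVals C k ≤ x).card : ℝ) ∧
      (n : ℝ)⁻¹ * ((univ.filter fun k => singVals C k ≤ x).card : ℝ) ≤ 1 := by
    intro C x
    refine ⟨by positivity, ?_⟩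
    rw [inv_mul_le_iff₀ hn', mul_one]
    have := Finset.card_filter_le (univ : Finset (Fin n)) (fun k => singVals C k ≤ x)
    rw [Finset.card_univ, Fintype.card_fin] at this
    exact_mod_cast this
  set f : ℝ → ℝ := fun x => |(n : ℝ)⁻¹ * ((univ.filter fun k => singVals A k ≤ x).card : ℝ)
            - (n : ℝ)⁻¹ * ((univ.filter fun k => singVals B k ≤ x).card : ℝ)| with hf
  have hb : BddAbove (Set.range f) := by
    refine ⟨1, ?_⟩
    rintro _ ⟨x, rfl⟩
    have a := bnd A x
    have b := bnd B x
    exact abs_le.2 ⟨by linarith, by linarith⟩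
  have key : (n : ℝ)⁻¹ * Real.log ‖A.det‖ - (n : ℝ)⁻¹ * Real.log ‖B.det‖ =
      - ∫ t in (Real.log α)..(Real.log β),
        ((n : ℝ)⁻¹ * ((univ.filter fun k => singVals A k ≤ Real.exp t).card : ℝ)
          - (n : ℝ)⁻¹ * ((univ.filter fun k => singVals B k ≤ Real.exp t).card : ℝ)) := by
    rw [intervalIntegral.integral_sub (iA.const_mul _) (iB.const_mul _),
      intervalIntegral.integral_const_mul, intervalIntegral.integral_const_mul, eA, eB]
    ring
  rw [key, abs_neg, mul_comm]
  have := intervalIntegral.norm_integral_le_of_norm_le_const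
    (a := Real.log α) (b := Real.log β) (C := ⨆ x, f x)
    (f := fun t => ((n : ℝ)⁻¹ * ((univ.filter fun k => singVals A k ≤ Real.exp t).card : ℝ)
          - (n : ℝ)⁻¹ * ((univ.filter fun k => singVals B k ≤ Real.exp t).card : ℝ)))
    (fun t _ => le_ciSup hb (Real.exp t))
  rwa [abs_of_nonneg (sub_nonneg.2 hl)] at this
end
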